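/- Let 1 ≤ p < q ≤ m with 1 < q − p < m − 1. Let φ be an anonymous (p, q)-PFBR on [D_≺(p, q)]^n and suppose φ(P) = Σ_{k=1}^r α^k e_{f^k(P)} for all profiles P, where each f^k is a (p, q)-FBR with constrained dictator i^k and α^1, …, α^r > 0 with Σ_{k=1}^r α^k = 1. Then for every voter i ∈ N, the total weight of the FBRs whose constrained dictator is i equals 1/n: Σ_{k : i^k = i} α^k = 1/n. -/

import Mathlib

open Finset

noncomputable section

/-- A preference is a linear order over the `m` alternatives, represented as a bijection
from rank positions (0-based: position `0` is the top) to alternatives. -/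
abbrev Pref (m : ℕ) := Fin m ≃ Fin m

namespace PFBRPaper

variable {m n : ℕ}

/-- `a` is strictly preferred to `b` under `P`. -/
def Prefers (P : Pref m) (a b : Fin m) : Prop := P.symm a < P.symm b

/-- The last alternative `a_m` (0-based index `m-1`). -/
def lastAlt (m : ℕ) [NeZero m] : Fin m :=
  ⟨m - 1, Nat.sub_lt (Nat.pos_of_ne_zero (NeZero.ne m)) Nat.one_pos⟩

/-- Every alternative is top-ranked by some preference in the domain. -/
def MinimallyRich [NeZero m] (D : Set (Pref m)) : Prop :=
  ∀ a : Fin m, ∃ P ∈ D, P 0 = a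

/-- The preference ranking `a_m` first, ..., `a_1` last. -/
def revPref (m : ℕ) : Pref m :=
  ⟨Fin.rev, Fin.rev, fun i => Fin.rev_rev i, fun i => Fin.rev_rev i⟩

/-- Diversity, with the labeling convention: the domain contains the preference ranking
`a_1` first, `a_2` second, ..., `a_m` last (the identity), together with its
complete reversal. -/
def Diversity (D : Set (Pref m)) : Prop :=
  Equiv.refl (Fin m) ∈ D ∧ revPref m ∈ D

/-- Two preferences are adjacent: the alternatives at two contiguous rank positions are
swapped and everything else is unchanged. -/
def Adjacent (P P' : Pref m) : Prop :=
  P ≠ P' ∧ ∃ k : ℕ, ∃ hk : k + 1 < m,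
    P ⟨k, Nat.lt_of_succ_lt hk⟩ = P' ⟨k + 1, hk⟩ ∧
    P ⟨k + 1, hk⟩ = P' ⟨k, Nat.lt_of_succ_lt hk⟩ ∧
    ∀ l : Fin m, (l : ℕ) ≠ k → (l : ℕ) ≠ k + 1 → P l = P' l

/-- `π 0, …, π (v-1)` is a path in `D` connecting `P` and `P'`. -/
def IsPath (D : Set (Pref m)) (P P' : Pref m) (π : ℕ → Pref m) (v : ℕ) : Prop :=
  1 ≤ v ∧ (∀ i < v, π i ∈ D) ∧
  (∀ i < v, ∀ j < v, π i = π j → i = j) ∧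
  π 0 = P ∧ π (v - 1) = P' ∧
  ∀ i, i + 1 < v → Adjacent (π i) (π (i + 1))

/-- The path `π 0, …, π (v-1)` has no `{a,b}`-restoration: the relative ranking of
`a` and `b` switches at most once along the path. -/
def NoRestoration (π : ℕ → Pref m) (v : ℕ) (a b : Fin m) : Prop :=
  ∀ i j k : ℕ, i < j → j < k → k < v →
    ¬(Prefers (π i) a b ∧ Prefers (π j) b a ∧ Prefers (π k) a b) ∧
    ¬(Prefers (π i) b a ∧ Prefers (π j) a b ∧ Prefers (π k) b a)

def NoRestorationDomain (D : Set (Pref m)) : Prop :=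
  ∀ P ∈ D, ∀ P' ∈ D, P ≠ P' → ∀ a b : Fin m,
    ∃ π v, IsPath D P P' π v ∧ NoRestoration π v a b

def RegularDomain [NeZero m] (D : Set (Pref m)) : Prop :=
  MinimallyRich D ∧ Diversity D ∧ NoRestorationDomain D

/-- `a ≈ b`: the two alternatives are strongly connected in the domain `D`. -/
def StronglyConnected [NeZero m] (D : Set (Pref m)) (a b : Fin m) : Prop :=
  a ≠ b ∧ ∃ P ∈ D, ∃ P' ∈ D,
    P 0 = a ∧ P 1 = b ∧ P' 0 = b ∧ P' 1 = a ∧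
    ∀ k : Fin m, 2 ≤ (k : ℕ) → P k = P' k

/-- `l` is a vertex-path of the graph `G_≈^B(D)`. -/
def IsVertexPathOn [NeZero m] (D : Set (Pref m)) (B : Set (Fin m)) (l : List (Fin m)) : Prop :=
  l ≠ [] ∧ l.Nodup ∧ (∀ x ∈ l, x ∈ B) ∧ l.Chain' (StronglyConnected D)

/-- `l` is a vertex-path of `G_≈^B(D)` connecting `a` and `b`. -/
def VertexPathBetween [NeZero m] (D : Set (Pref m)) (B : Set (Fin m)) (a b : Fin m)
    (l : List (Fin m)) : Prop :=
  IsVertexPathOn D B l ∧ l.head? = some a ∧ l.getLast? = some b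

/-- `a` is a leaf of the subgraph `G_≈^B(D)`. -/
def IsLeaf [NeZero m] (D : Set (Pref m)) (B : Set (Fin m)) (a : Fin m) : Prop :=
  a ∈ B ∧ ∃! b : Fin m, b ∈ B ∧ StronglyConnected D a b

/-- Single-peakedness w.r.t. the natural order. -/
def SinglePeaked [NeZero m] (P : Pref m) : Prop :=
  ∀ a b : Fin m, ((a < b ∧ b < P 0) ∨ (P 0 < b ∧ b < a)) → Prefers P b a

/-- A `(p,q)`-hybrid preference (thresholds `p < q`, 0-based). -/
def IsHybridPref [NeZero m] (p q : Fin m) (P : Pref m) : Prop :=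
  (∀ r s : Fin m, ((r ≤ p ∧ s ≤ p) ∨ (q ≤ r ∧ q ≤ s)) →
      ((r < s ∧ s < P 0) ∨ (P 0 < s ∧ s < r)) → Prefers P s r) ∧
  (P 0 ≤ p → ∀ l : Fin m, p ≤ l → l ≤ q → l ≠ p → Prefers P p l) ∧
  (q ≤ P 0 → ∀ l : Fin m, p ≤ l → l ≤ q → l ≠ q → Prefers P q l)

/-- The `(p,q)`-hybrid domain of all `(p,q)`-hybrid preferences. -/
def hybridDomain [NeZero m] (p q : Fin m) : Set (Pref m) := {P | IsHybridPref p q P}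

/-- `D` is a `(p,q)`-hybrid* domain. -/
def IsHybridStar [NeZero m] (D : Set (Pref m)) (p q : Fin m) : Prop :=
  D ⊆ hybridDomain p q ∧
  (∀ k : Fin m, k ≠ 0 → k ≠ lastAlt m →
      ∃ l, VertexPathBetween D Set.univ 0 (lastAlt m) l ∧ k ∈ l) ∧
  ((p : ℕ) + 1 < (q : ℕ) → ∀ a : Fin m, ¬ IsLeaf D (Set.Icc p q) a)

/-- A lottery over the alternatives. -/
def Lottery (m : ℕ) : Type :=
  {f : Fin m → ℝ // (∀ a, 0 ≤ f a) ∧ ∑ a, f a = 1}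

/-- The probability that a lottery assigns to a set of alternatives. -/
def Lottery.prob (lam : Lottery m) (B : Finset (Fin m)) : ℝ := ∑ a ∈ B, lam.1 a

/-- The support of a lottery. -/
def Lottery.supp (lam : Lottery m) : Finset (Fin m) :=
  Finset.univ.filter (fun a => 0 < lam.1 a)

/-- The degenerate lottery on `a`. -/
def degLottery (a : Fin m) : Lottery m :=
  ⟨fun b => if b = a then 1 else 0,
   fun b => by by_cases h : b = a <;> simp [h],
   by simp⟩

/-- A profile of preferences drawn from the domain `D`. -/
abbrev Profile (D : Set (Pref m)) (n : ℕ) := Fin n → D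

/-- The top-ranked alternative of a preference in the domain. -/
def topOf [NeZero m] {D : Set (Pref m)} (P : D) : Fin m := P.1 0

def Unanimous [NeZero m] {D : Set (Pref m)} (φ : Profile D n → Lottery m) : Prop :=
  ∀ (P : Profile D n) (a : Fin m), (∀ i, topOf (P i) = a) → φ P = degLottery a

/-- The total probability of the `k` top-ranked alternatives of `P` under `lam`. -/
def topSum (lam : Lottery m) (P : Pref m) (k : ℕ) : ℝ :=
  ∑ t ∈ Finset.univ.filter (fun t : Fin m => (t : ℕ) < k), lam.1 (P t)

/-- Strategy-proofness: truth-telling first-order stochastically dominates any unilateral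
misrepresentation. -/
def StrategyProof {D : Set (Pref m)} (φ : Profile D n → Lottery m) : Prop :=
  ∀ (i : Fin n) (P : Profile D n) (Pi' : D) (k : ℕ), k ≤ m →
    topSum (φ (Function.update P i Pi')) (P i).1 k ≤ topSum (φ P) (P i).1 k

def TopsOnly [NeZero m] {D : Set (Pref m)} (φ : Profile D n → Lottery m) : Prop :=
  ∀ P P' : Profile D n, (∀ i, topOf (P i) = topOf (P' i)) → φ P = φ P'

def Anonymous {D : Set (Pref m)} (φ : Profile D n → Lottery m) : Prop :=
  ∀ (P : Profile D n) (σ : Equiv.Perm (Fin n)), φ (P ∘ σ) = φ P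

/-- The interval `[a_k, a_m]`. -/
def upSet (k : Fin m) : Finset (Fin m) := Finset.univ.filter (fun a => k ≤ a)

/-- The interval `[a_1, a_k]`. -/
def downSet (k : Fin m) : Finset (Fin m) := Finset.univ.filter (fun a => a ≤ k)

/-- The interval `[a_p, a_q]`. -/
def midSet (p q : Fin m) : Finset (Fin m) := Finset.univ.filter (fun a => p ≤ a ∧ a ≤ q)

/-- `S(k,P)`: the voters whose preference top is not to the left of `a_k`. -/
def voterSet [NeZero m] {D : Set (Pref m)} (P : Profile D n) (k : Fin m) : Finset (Fin n) :=
  Finset.univ.filter (fun i => k ≤ topOf (P i))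

/-- `β_{S(k,P)}([a_k, a_m])`, with the convention that it is `0` for `k = m`. -/
def tailProb [NeZero m] {D : Set (Pref m)} (β : Finset (Fin n) → Lottery m)
    (P : Profile D n) (k : ℕ) : ℝ :=
  if h : k < m then (β (voterSet P ⟨k, h⟩)).prob (upSet ⟨k, h⟩) else 0

def BallotUnanimity [NeZero m] (β : Finset (Fin n) → Lottery m) : Prop :=
  β Finset.univ = degLottery (lastAlt m) ∧ β ∅ = degLottery 0

def BallotMonotone (β : Finset (Fin n) → Lottery m) : Prop :=
  ∀ S T : Finset (Fin n), S ⊂ T →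
    ∀ k : Fin m, (β S).prob (upSet k) ≤ (β T).prob (upSet k)

/-- `φ` is a probabilistic fixed ballot rule with probabilistic ballots `β`. -/
def IsPFBRWith [NeZero m] {D : Set (Pref m)} (φ : Profile D n → Lottery m)
    (β : Finset (Fin n) → Lottery m) : Prop :=
  BallotUnanimity β ∧ BallotMonotone β ∧
  ∀ (P : Profile D n) (k : Fin m),
    (φ P).1 k = tailProb β P (k : ℕ) - tailProb β P ((k : ℕ) + 1)

def IsPFBR [NeZero m] {D : Set (Pref m)} (φ : Profile D n → Lottery m) : Prop :=
  ∃ β, IsPFBRWith φ β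

/-- The constrained random-dictatorship condition w.r.t. `a_p` and `a_q`. -/
def ConstrainedRD (p q : Fin m) (β : Finset (Fin n) → Lottery m) : Prop :=
  ∃ ε : Fin n → ℝ, (∀ i, 0 ≤ ε i) ∧ ∑ i, ε i = 1 ∧
    ∀ S : Finset (Fin n),
      (β S).prob (upSet q) = ∑ i ∈ S, ε i ∧
      (β S).prob (downSet p) = ∑ i ∈ Sᶜ, ε i

/-- The constrained random-dictatorship condition w.r.t. `a_p` and `a_q` with every
conditional dictatorial coefficient equal to `1/n`. -/
def ConstrainedRDUniform (p q : Fin m) (β : Finset (Fin n) → Lottery m) : Prop :=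
  ∀ S : Finset (Fin n),
    (β S).prob (upSet q) = (S.card : ℝ) / (n : ℝ) ∧
    (β S).prob (downSet p) = ((Sᶜ : Finset (Fin n)).card : ℝ) / (n : ℝ)

/-- Anonymity at the level of probabilistic ballots. -/
def BallotAnonymous (β : Finset (Fin n) → Lottery m) : Prop :=
  ∀ S S' : Finset (Fin n), S.Nonempty → S'.Nonempty → S.card = S'.card → β S = β S'

/-- Per-capita monotonicity w.r.t. `a_p` and `a_q`. -/
def PerCapitaMonotone (p q : Fin m) (β : Finset (Fin n) → Lottery m) : Prop :=
  ∀ S S' : Finset (Fin n), S.Nonempty → S ⊂ S' → S' ⊂ Finset.univ →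
    (∀ t : Fin m, q ≤ t →
      (β S).prob (upSet t) / (S.card : ℝ) ≤ (β S').prob (upSet t) / (S'.card : ℝ)) ∧
    (∀ s : Fin m, s ≤ p →
      (β Sᶜ).prob (downSet s) / (S.card : ℝ) ≤ (β S'ᶜ).prob (downSet s) / (S'.card : ℝ))

/-- Decomposability: `φ` is a mixture of finitely many unanimous and strategy-proof
deterministic social choice functions. -/
def Decomposable [NeZero m] {D : Set (Pref m)} (φ : Profile D n → Lottery m) : Prop :=
  ∃ (r : ℕ) (f : Fin r → (Profile D n → Fin m)) (α : Fin r → ℝ),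
    (∀ k, 0 < α k) ∧ ∑ k, α k = 1 ∧
    (∀ k, Unanimous (fun P => degLottery (f k P)) ∧
          StrategyProof (fun P => degLottery (f k P))) ∧
    ∀ (P : Profile D n) (a : Fin m),
      (φ P).1 a = ∑ k, α k * (if f k P = a then 1 else 0)

/-- `b̂_S^R`: the `≺`-minimum of `supp(β_S) ∩ R` (with the convention `b̂_N^R = a_m`). -/
def bR [NeZero m] (β : Finset (Fin n) → Lottery m) (q : Fin m) (S : Finset (Fin n)) : Fin m :=
  if h : ((β S).supp ∩ upSet q).Nonempty then ((β S).supp ∩ upSet q).min' h else lastAlt m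

/-- `b̂_S^L`: the `≺`-maximum of `supp(β_S) ∩ L` (with the convention `b̂_∅^L = a_1`). -/
def bL [NeZero m] (β : Finset (Fin n) → Lottery m) (p : Fin m) (S : Finset (Fin n)) : Fin m :=
  if h : ((β S).supp ∩ downSet p).Nonempty then ((β S).supp ∩ downSet p).max' h else 0

/-- `α = min over nonempty S ⊂ N of min(β_S(b̂_S^R)/|S|, β_S(b̂_S^L)/(n-|S|))`. -/
def alphaVal [NeZero m] (β : Finset (Fin n) → Lottery m) (p q : Fin m) : ℝ :=
  sInf {x : ℝ | ∃ S : Finset (Fin n), S.Nonempty ∧ S ≠ Finset.univ ∧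
    x = min ((β S).1 (bR β q S) / (S.card : ℝ))
            ((β S).1 (bL β p S) / ((n : ℝ) - (S.card : ℝ)))}

/-- `γ_S = (|S|/n) e_{b̂_S^R} + ((n-|S|)/n) e_{b̂_S^L}`, pointwise. -/
def gammaFun [NeZero m] (β : Finset (Fin n) → Lottery m) (p q : Fin m)
    (S : Finset (Fin n)) (a : Fin m) : ℝ :=
  ((S.card : ℝ) / (n : ℝ)) * (if a = bR β q S then 1 else 0)
  + (((n : ℝ) - (S.card : ℝ)) / (n : ℝ)) * (if a = bL β p S then 1 else 0)

/-- The max-min formula `f(P) = max_{S ⊆ N} min({r_1(P_j) : j ∈ S} ∪ {b_S})`. -/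
def fbrOutcome [NeZero m] {D : Set (Pref m)} (b : Finset (Fin n) → Fin m)
    (P : Profile D n) : Fin m :=
  Finset.univ.sup' Finset.univ_nonempty
    (fun S : Finset (Fin n) =>
      (insert (b S) (S.image (fun j => topOf (P j)))).inf' (Finset.insert_nonempty _ _) id)

/-- `f` is a `(p,q)`-fixed ballot rule with deterministic ballots `b` and constrained
dictator `i`. -/
def IsFBRWith [NeZero m] {D : Set (Pref m)} (p q : Fin m) (f : Profile D n → Fin m)
    (b : Finset (Fin n) → Fin m) (i : Fin n) : Prop :=
  b Finset.univ = lastAlt m ∧ b ∅ = 0 ∧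
  (∀ S T : Finset (Fin n), S ⊂ T → b S ≤ b T) ∧
  (∀ S : Finset (Fin n), (i ∈ S → q ≤ b S) ∧ (i ∉ S → b S ≤ p)) ∧
  ∀ P : Profile D n, f P = fbrOutcome b P

end PFBRPaper

open PFBRPaper

/-! A fixed ballot rule with constrained dictator `d` selects an alternative in `[a_q, a_m]`
exactly when the top of voter `d` lies there: the max-min formula reaches `[a_q, a_m]` iff some
coalition has its ballot and all its tops in it, and the ballots in it are those of the coalitions
containing `d`. So if voter `i` alone has a top in `[a_q, a_m]`, a mixture of such rules gives
this interval the total weight of the rules dictated by `i`. By anonymity this number is the same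
for all `i`; the `n` equal weights add up to `1`. -/

namespace PFBRPaper

variable {m n : ℕ} {D : Set (Pref m)} {p q : Fin m}

theorem Lottery.prob_eq_sum_of_mixture {ι : Type*} [Fintype ι] {lam : Lottery m} {x : ι → Fin m}
    {α : ι → ℝ} (h : ∀ a, lam.1 a = ∑ k, α k * (if x k = a then 1 else 0))
    (B : Finset (Fin m)) : lam.prob B = ∑ k with x k ∈ B, α k := by
  simp only [Lottery.prob, h, mul_ite, mul_one, mul_zero]
  rw [sum_comm, sum_filter]
  simp only [sum_ite_eq]

theorem Anonymous.update_const_eq {φ : Profile D n → Lottery m} (hφ : Anonymous φ)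
    (P Q : D) (i j : Fin n) :
    φ (Function.update (fun _ => P) i Q) = φ (Function.update (fun _ => P) j Q) := by
  rw [← hφ (Function.update (fun _ => P) i Q) (Equiv.swap i j), Function.update_comp_equiv,
    Equiv.symm_swap, Equiv.swap_apply_left]
  rfl

variable [NeZero m]

variable (m) in
theorem revPref_zero : revPref m 0 = lastAlt m := by
  apply Fin.ext
  simp [revPref, lastAlt, Fin.val_rev]

theorem le_lastAlt (a : Fin m) : a ≤ lastAlt m :=
  Nat.le_sub_one_of_lt a.isLt

theorem isHybridPref_refl (p q : Fin m) : IsHybridPref p q (Equiv.refl (Fin m)) := by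
  refine ⟨?_, fun _ l hpl _ hlp => lt_of_le_of_ne hpl hlp.symm, ?_⟩
  · rintro r s - (⟨-, hs⟩ | ⟨-, hsr⟩)
    · exact absurd hs (Fin.not_lt_zero s)
    · exact hsr
  · intro hq l _ hlq hne
    exact absurd (hlq.antisymm (hq.trans (Fin.zero_le l))) hne

theorem isHybridPref_revPref (p q : Fin m) : IsHybridPref p q (revPref m) := by
  refine ⟨?_, ?_, fun _ l _ hlq hne => Fin.rev_lt_rev.2 (lt_of_le_of_ne hlq hne)⟩
  · rintro r s - (⟨hrs, -⟩ | ⟨hs, -⟩)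
    · exact Fin.rev_lt_rev.2 hrs
    · exact absurd (revPref_zero m ▸ hs) (le_lastAlt s).not_gt
  · intro hp l hpl _ hne
    exact absurd (((le_lastAlt l).trans (revPref_zero m ▸ hp)).antisymm hpl) hne

theorem diversity_hybridDomain (p q : Fin m) : Diversity (hybridDomain p q) :=
  ⟨isHybridPref_refl p q, isHybridPref_revPref p q⟩

theorem Diversity.exists_topOf_lt (hD : Diversity D) (hq : 0 < q) : ∃ P : D, topOf P < q :=
  ⟨⟨_, hD.1⟩, hq⟩

theorem Diversity.exists_le_topOf (hD : Diversity D) (q : Fin m) : ∃ P : D, q ≤ topOf P :=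
  ⟨⟨_, hD.2⟩, (le_lastAlt q).trans_eq (revPref_zero m).symm⟩

theorem le_fbrOutcome_iff {b : Finset (Fin n) → Fin m} {P : Profile D n} {a : Fin m} :
    a ≤ fbrOutcome b P ↔ ∃ S, a ≤ b S ∧ ∀ j ∈ S, a ≤ topOf (P j) := by
  simp [fbrOutcome]

/-- Voter `d` is a dictator over `[a_q, a_m]`: the outcome of `f` lies in this interval exactly
when the top of `d` does. It isolates the part of constrained dictatorship that fixes the
probability of `[a_q, a_m]`, leaving open how `f` chooses within it or within its complement. -/
def IsUpperDictator (q : Fin m) (f : Profile D n → Fin m) (d : Fin n) : Prop :=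
  ∀ P, q ≤ f P ↔ q ≤ topOf (P d)

theorem IsFBRWith.isUpperDictator {f : Profile D n → Fin m} {b : Finset (Fin n) → Fin m}
    {d : Fin n} (hf : IsFBRWith p q f b d) (hpq : p < q) : IsUpperDictator q f d := by
  obtain ⟨-, -, -, hdict, hf⟩ := hf
  intro P
  rw [hf, le_fbrOutcome_iff]
  constructor
  · rintro ⟨S, hbS, hS⟩
    have hd : d ∈ S := by
      by_contra hd
      exact (((hdict S).2 hd).trans_lt hpq).not_ge hbS
    exact hS d hd
  · intro hd
    refine ⟨{d}, (hdict {d}).1 (mem_singleton_self d), ?_⟩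
    simpa only [mem_singleton, forall_eq] using hd

theorem IsUpperDictator.le_update_const_iff {f : Profile D n → Fin m} {d : Fin n}
    (hf : IsUpperDictator q f d) {low high : D} (hlow : topOf low < q) (hhigh : q ≤ topOf high)
    (i : Fin n) : q ≤ f (Function.update (fun _ => low) i high) ↔ d = i := by
  rw [hf]
  rcases eq_or_ne d i with rfl | hne
  · simpa only [Function.update_self, iff_true] using hhigh
  · simpa only [Function.update_of_ne hne, hne, iff_false, not_le] using hlow

end PFBRPaper

theorem dictator_weights_general {m n : ℕ} [NeZero m] {D : Set (Pref m)} {q : Fin m}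
    (hlow : ∃ P : D, topOf P < q) (hhigh : ∃ P : D, q ≤ topOf P)
    {φ : Profile D n → Lottery m} (hanon : Anonymous φ)
    {ι : Type*} [Fintype ι] {f : ι → Profile D n → Fin m} {dict : ι → Fin n} {α : ι → ℝ}
    (hsum : ∑ k, α k = 1) (hdict : ∀ k, IsUpperDictator q (f k) (dict k))
    (hdecomp : ∀ P a, (φ P).1 a = ∑ k, α k * (if f k P = a then 1 else 0)) (i : Fin n) :
    ∑ k with dict k = i, α k = 1 / (n : ℝ) := by
  obtain ⟨low, hlow⟩ := hlow
  obtain ⟨high, hhigh⟩ := hhigh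
  have weight_eq_prob (j : Fin n) : ∑ k with dict k = j, α k =
      (φ (Function.update (fun _ => low) j high)).prob (upSet q) := by
    rw [Lottery.prob_eq_sum_of_mixture (hdecomp _)]
    simp only [upSet, mem_filter_univ, (hdict _).le_update_const_iff hlow hhigh]
  have weight_eq (j : Fin n) : ∑ k with dict k = j, α k = ∑ k with dict k = i, α k := by
    rw [weight_eq_prob, weight_eq_prob, hanon.update_const_eq low high j i]
  have hn : (n : ℝ) ≠ 0 := Nat.cast_ne_zero.2 i.pos.ne'
  rw [eq_div_iff hn]
  calc (∑ k with dict k = i, α k) * n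
      = ∑ j, ∑ k with dict k = j, α k := by simp [weight_eq, mul_comm]
    _ = ∑ k, α k := sum_fiberwise _ _ _
    _ = 1 := hsum

/-- In any decomposition of an anonymous `(p,q)`-PFBR into `(p,q)`-FBRs,
each voter is the constrained dictator with total weight exactly `1/n`. -/
theorem dictator_weights (m n : ℕ) [NeZero m] (hm : 3 ≤ m) (hn : 2 ≤ n)
    (p q : Fin m) (hgap1 : (p : ℕ) + 1 < (q : ℕ)) (hgap2 : (q : ℕ) - (p : ℕ) < m - 1)
    (φ : Profile (hybridDomain p q) n → Lottery m)
    (β : Finset (Fin n) → Lottery m)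
    (hβ : IsPFBRWith φ β) (hcrd : ConstrainedRD p q β) (hanon : Anonymous φ)
    (r : ℕ) (f : Fin r → (Profile (hybridDomain p q) n → Fin m))
    (b : Fin r → (Finset (Fin n) → Fin m)) (dict : Fin r → Fin n)
    (α : Fin r → ℝ) (hα : ∀ k, 0 < α k) (hsum : ∑ k, α k = 1)
    (hfbr : ∀ k, IsFBRWith p q (f k) (b k) (dict k))
    (hdecomp : ∀ (P : Profile (hybridDomain p q) n) (a : Fin m),
        (φ P).1 a = ∑ k, α k * (if f k P = a then 1 else 0)) :
    ∀ i : Fin n,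
      ∑ k ∈ Finset.univ.filter (fun k => dict k = i), α k = 1 / (n : ℝ) := by
  have hpq : p < q := Nat.lt_of_succ_lt hgap1
  have hD := diversity_hybridDomain p q
  exact dictator_weights_general (hD.exists_topOf_lt (pos_of_gt hpq)) (hD.exists_le_topOf q)
    hanon hsum (fun k => (hfbr k).isUpperDictator hpq) hdecomp
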